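/- arXiv:2003.14393 — 3 statements merged into one kernel-verified Lean document; each statement's English description precedes it below -/
import Mathlib

section
/- Let E be a finite-dimensional real inner product space and let f, g₁, g₂ : E → ℝ be continuously differentiable. Let (ηᵏ)_{k≥1} be a sequence of positive reals with ηᵏ⁺¹ ≤ ηᵏ and ηᵏ → 0, let (εᵏ)_{k≥1} be a sequence of nonnegative reals with εᵏ → 0, let (θᵏ)_{k≥0} be a sequence in the 2-simplex (θ₁ᵏ ≥ 0, θ₂ᵏ ≥ 0, θ₁ᵏ + θ₂ᵏ = 1), and let (yᵏ)_{k≥1} be a sequence in E such that for every k, ‖∇_y L_{ηᵏ}(yᵏ; θᵏ⁻¹)‖ ≤ εᵏ. Then for every cluster point y* of the sequence (yᵏ) there exists λ ∈ [0,1] such that ∇f(y*) + λ∇g₁(y*) + (1−λ)∇g₂(y*) = 0. -/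
open Real Filter Topology

/-- The gradient of the weighted log-sum-exp smoothing of `f + max g₁ g₂` is `∇f` plus a convex
combination of `∇g₁` and `∇g₂`. -/
lemma exists_gradient_add_log_sum_exp_eq
    {E : Type*} [NormedAddCommGroup E] [InnerProductSpace ℝ E] [CompleteSpace E]
    {f g₁ g₂ : E → ℝ} {x : E} (hf : DifferentiableAt ℝ f x)
    (hg₁ : DifferentiableAt ℝ g₁ x) (hg₂ : DifferentiableAt ℝ g₂ x)
    {η a b : ℝ} (hη : 0 < η) (ha : 0 ≤ a) (hb : 0 ≤ b) (hab : a + b = 1) :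
    ∃ lam ∈ Set.Icc (0 : ℝ) 1,
      gradient (fun z : E => f z + η *
        Real.log (a * Real.exp (g₁ z / η) + b * Real.exp (g₂ z / η))) x =
      gradient f x + lam • gradient g₁ x + (1 - lam) • gradient g₂ x := by
  set A := a * Real.exp (g₁ x / η) with hA
  set B := b * Real.exp (g₂ x / η) with hB
  have hA0 : 0 ≤ A := by positivity
  have hB0 : 0 ≤ B := by positivity
  have hAB : 0 < A + B := by
    rcases ha.eq_or_lt with h | h
    · have : 0 < b := by linarith
      have : 0 < B := by positivity
      linarith
    · have : 0 < A := by positivity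
      linarith
  refine ⟨A / (A + B), ⟨by positivity, (div_le_one hAB).2 (by linarith)⟩, ?_⟩
  have h₁ := ((hg₁.hasFDerivAt.mul_const η⁻¹).exp).const_mul a
  have h₂ := ((hg₂.hasFDerivAt.mul_const η⁻¹).exp).const_mul b
  simp only [← div_eq_mul_inv] at h₁ h₂
  have h := hf.hasFDerivAt.add (((h₁.add h₂).log hAB.ne').const_mul η)
  have hF := h.fderiv
  have hone : 1 - A / (A + B) = B / (A + B) := by field_simp; ring
  simp only [gradient, hone, ← map_smul, ← map_add]
  congr 1
  refine hF.trans ?_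
  ext v
  simp only [Pi.add_apply, ← hA, ← hB, add_apply,
    smul_apply, smul_eq_mul]
  field_simp
  rw [hA, hB]
  ring

/-- The gradient of a continuously differentiable function is continuous. -/
lemma ContDiff.continuous_gradient
    {E : Type*} [NormedAddCommGroup E] [InnerProductSpace ℝ E] [CompleteSpace E]
    {f : E → ℝ} (hf : ContDiff ℝ 1 f) : Continuous (gradient f) :=
  (InnerProductSpace.toDual ℝ E).symm.continuous.comp (hf.continuous_fderiv one_ne_zero)

/-- **Convergence under inexact minimization (Theorem 1).**
For continuously differentiable `f, g₁, g₂` on a finite-dimensional real inner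
product space, a positive nonincreasing sequence `η k → 0`, nonnegative errors
`ε k → 0`, dual iterates `θ k` in the 2-simplex, and iterates `y k` with
`‖∇ L_{η k}(y k; θ (k-1))‖ ≤ ε k`, every cluster point `y*` of `(y k)` satisfies
`∇f(y*) + λ ∇g₁(y*) + (1-λ) ∇g₂(y*) = 0` for some `λ ∈ [0,1]`. -/
theorem tron_convergence_inexact_minimization
    {E : Type*} [NormedAddCommGroup E] [InnerProductSpace ℝ E]
    [FiniteDimensional ℝ E]
    (f g₁ g₂ : E → ℝ)
    (hf : ContDiff ℝ 1 f) (hg₁ : ContDiff ℝ 1 g₁) (hg₂ : ContDiff ℝ 1 g₂)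
    (η : ℕ → ℝ) (hηpos : ∀ k, 0 < η k)
    (hηmono : ∀ k, η (k + 1) ≤ η k)
    (hηlim : Tendsto η atTop (𝓝 0))
    (ε : ℕ → ℝ) (hεnonneg : ∀ k, 0 ≤ ε k)
    (hεlim : Tendsto ε atTop (𝓝 0))
    (θ : ℕ → ℝ × ℝ)
    (hθ : ∀ k, 0 ≤ (θ k).1 ∧ 0 ≤ (θ k).2 ∧ (θ k).1 + (θ k).2 = 1)
    (y : ℕ → E)
    (hy : ∀ k : ℕ,
      ‖gradient (fun z : E => f z + η (k + 1) *
        Real.log ((θ k).1 * Real.exp (g₁ z / η (k + 1)) +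
                  (θ k).2 * Real.exp (g₂ z / η (k + 1)))) (y (k + 1))‖
        ≤ ε (k + 1))
    (ystar : E)
    (hcluster : ∃ φ : ℕ → ℕ, StrictMono φ ∧ Tendsto (y ∘ φ) atTop (𝓝 ystar)) :
    ∃ lam : ℝ, lam ∈ Set.Icc (0 : ℝ) 1 ∧
      gradient f ystar + lam • gradient g₁ ystar +
        (1 - lam) • gradient g₂ ystar = 0 := by
  obtain ⟨φ, hφ, hlim⟩ := hcluster
  have key : ∀ k, ∃ lam ∈ Set.Icc (0 : ℝ) 1, ‖gradient f (y (k + 1)) +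
      lam • gradient g₁ (y (k + 1)) + (1 - lam) • gradient g₂ (y (k + 1))‖ ≤ ε (k + 1) := by
    intro k
    obtain ⟨ha, hb, hab⟩ := hθ k
    obtain ⟨lam, hlam, h⟩ := exists_gradient_add_log_sum_exp_eq
      (hf.differentiable one_ne_zero (y (k + 1))) (hg₁.differentiable one_ne_zero (y (k + 1)))
      (hg₂.differentiable one_ne_zero (y (k + 1))) (hηpos (k + 1)) ha hb hab
    exact ⟨lam, hlam, h ▸ hy k⟩
  choose l hl hle using key
  obtain ⟨lam, hlam, ψ, hψ, hψlim⟩ :=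
    isCompact_Icc.tendsto_subseq (fun n => hl (φ n - 1))
  refine ⟨lam, hlam, ?_⟩
  have hyψ : Tendsto (fun n => y (φ (ψ n))) atTop (𝓝 ystar) := hlim.comp hψ.tendsto_atTop
  have hεψ : Tendsto (fun n => ε (φ (ψ n))) atTop (𝓝 0) :=
    hεlim.comp (hφ.tendsto_atTop.comp hψ.tendsto_atTop)
  have hgrad {h : E → ℝ} (hh : ContDiff ℝ 1 h) :
      Tendsto (fun n => gradient h (y (φ (ψ n)))) atTop (𝓝 (gradient h ystar)) :=
    (hh.continuous_gradient.tendsto ystar).comp hyψ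
  have hsum := ((hgrad hf).add (hψlim.smul (hgrad hg₁))).add
    ((hψlim.const_sub 1).smul (hgrad hg₂))
  refine tendsto_nhds_unique hsum (squeeze_zero_norm' ?_ hεψ)
  filter_upwards [(hφ.tendsto_atTop.comp hψ.tendsto_atTop).eventually_ge_atTop 1] with n hn
  have hbound := hle (φ (ψ n) - 1)
  rwa [show φ (ψ n) - 1 + 1 = φ (ψ n) from Nat.sub_add_cancel hn] at hbound
end

section
/- Let E be a finite-dimensional real inner product space and let f, g₁, g₂ : E → ℝ be continuously differentiable. Let (ηᵏ)_{k≥1} be a sequence of positive reals with ηᵏ → 0, let (εᵏ)_{k≥1} be nonnegative reals with εᵏ → 0, and let (θᵏ)_{k≥0} be a sequence in the 2-simplex such that for some c > 0, min(θ₁ᵏ, θ₂ᵏ) ≥ c for all k. Let (yᵏ)_{k≥1} satisfy ‖∇_y L_{ηᵏ}(yᵏ; θᵏ⁻¹)‖ ≤ εᵏ for every k. If y* is a cluster point of (yᵏ) with g₁(y*) > g₂(y*), then ∇f(y*) + ∇g₁(y*) = 0; if instead g₂(y*) > g₁(y*), then ∇f(y*) + ∇g₂(y*) = 0. -/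
open Real Filter Topology

section SmoothedMax

variable {E : Type*} [NormedAddCommGroup E] [InnerProductSpace ℝ E] [CompleteSpace E]

/-- The gradient of a `C¹` function is continuous. -/
lemma ContDiff.continuous_gradient_of_one {f : E → ℝ} (hf : ContDiff ℝ 1 f) :
    Continuous (gradient f) :=
  (InnerProductSpace.toDual ℝ E).symm.continuous.comp (hf.continuous_fderiv one_ne_zero)

/-- The gradient of a weighted log-sum-exp smoothing, written as a perturbation of
`∇f + ∇g₁` by the softmax weight of `g₂`. -/
lemma gradient_add_mul_log_exp_add_exp {f g₁ g₂ : E → ℝ} {x : E}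
    (hf : DifferentiableAt ℝ f x) (hg₁ : DifferentiableAt ℝ g₁ x)
    (hg₂ : DifferentiableAt ℝ g₂ x) {a b h : ℝ} (ha : 0 < a) (hb : 0 < b) (hh : h ≠ 0) :
    gradient (fun z => f z + h * log (a * exp (g₁ z / h) + b * exp (g₂ z / h))) x =
      gradient f x + gradient g₁ x +
        (b * exp (g₂ x / h) / (a * exp (g₁ x / h) + b * exp (g₂ x / h))) •
          (gradient g₂ x - gradient g₁ x) := by
  have hS : a * exp (g₁ x / h) + b * exp (g₂ x / h) ≠ 0 := by positivity
  have hexp₁ := ((hg₁.hasFDerivAt.mul_const h⁻¹).exp).const_mul a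
  have hexp₂ := ((hg₂.hasFDerivAt.mul_const h⁻¹).exp).const_mul b
  simp only [← div_eq_mul_inv] at hexp₁ hexp₂
  have hL := hf.hasFDerivAt.add (((hexp₁.add hexp₂).log hS).const_mul h)
  refine HasGradientAt.gradient (hasGradientAt_iff_hasFDerivAt.mpr (hL.congr_fderiv ?_))
  ext v
  simp only [gradient, map_add, map_smul, map_sub, LinearIsometryEquiv.apply_symm_apply,
    add_apply, smul_apply,
    sub_apply, smul_eq_mul, Pi.add_apply]
  field_simp
  ring

/-- The softmax weight of a strictly smaller component vanishes as the temperature tends to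
zero, provided the weights stay away from zero. -/
lemma tendsto_softmax_weight_zero {ι : Type*} {l : Filter ι} {a b h u v : ι → ℝ} {c p q : ℝ}
    (hc : 0 < c) (ha : ∀ i, c ≤ a i) (hb : ∀ i, 0 ≤ b i) (hb' : ∀ i, b i ≤ 1)
    (hh : ∀ i, 0 < h i) (hlim : Tendsto h l (𝓝 0))
    (hu : Tendsto u l (𝓝 p)) (hv : Tendsto v l (𝓝 q)) (hqp : q < p) :
    Tendsto (fun i => b i * exp (v i / h i) / (a i * exp (u i / h i) + b i * exp (v i / h i)))
      l (𝓝 0) := by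
  have hinv : Tendsto (fun i => (h i)⁻¹) l atTop :=
    (tendsto_nhdsWithin_iff.mpr ⟨hlim, Eventually.of_forall hh⟩).inv_tendsto_nhdsGT_zero
  have hexp : Tendsto (fun i => c⁻¹ * exp ((v i - u i) * (h i)⁻¹)) l (𝓝 0) := by
    simpa using (tendsto_exp_atBot.comp
      ((hv.sub hu).neg_mul_atTop (sub_neg.mpr hqp) hinv)).const_mul c⁻¹
  refine squeeze_zero (fun i => ?_) (fun i => ?_) hexp
  · have := hc.trans_le (ha i)
    have := hb i
    positivity
  · have ha' := hc.trans_le (ha i)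
    have hbi := hb i
    have hsplit : exp ((v i - u i) * (h i)⁻¹) = exp (v i / h i) / exp (u i / h i) := by
      rw [← exp_sub]; congr 1; ring
    calc b i * exp (v i / h i) / (a i * exp (u i / h i) + b i * exp (v i / h i))
        ≤ 1 * exp (v i / h i) / (c * exp (u i / h i)) := by
          gcongr
          · exact hb' i
          · have : c * exp (u i / h i) ≤ a i * exp (u i / h i) := by gcongr; exact ha i
            have : 0 ≤ b i * exp (v i / h i) := by positivity
            linarith
      _ = c⁻¹ * exp ((v i - u i) * (h i)⁻¹) := by
          rw [hsplit]; field_simp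

/-- Limits of approximate critical points of log-sum-exp smoothings with vanishing temperature
are critical for the strictly dominant component. -/
lemma gradient_add_gradient_eq_zero_of_tendsto {ι : Type*} {l : Filter ι} [l.NeBot]
    {f g₁ g₂ : E → ℝ}
    (hf : ContDiff ℝ 1 f) (hg₁ : ContDiff ℝ 1 g₁) (hg₂ : ContDiff ℝ 1 g₂)
    {a b h e : ι → ℝ} {c : ℝ} (hc : 0 < c) (ha : ∀ i, c ≤ a i) (hb : ∀ i, c ≤ b i)
    (hab : ∀ i, a i + b i = 1) (hh : ∀ i, 0 < h i) (hlim : Tendsto h l (𝓝 0))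
    (he : Tendsto e l (𝓝 0)) {x : ι → E} {xstar : E} (hx : Tendsto x l (𝓝 xstar))
    (hgrad : ∀ i, ‖gradient (fun z => f z + h i *
      log (a i * exp (g₁ z / h i) + b i * exp (g₂ z / h i))) (x i)‖ ≤ e i)
    (hlt : g₂ xstar < g₁ xstar) :
    gradient f xstar + gradient g₁ xstar = 0 := by
  have hcomp {g : E → ℝ} (hg : ContDiff ℝ 1 g) :
      Tendsto (fun i => gradient g (x i)) l (𝓝 (gradient g xstar)) :=
    (hg.continuous_gradient_of_one.tendsto xstar).comp hx
  have hw := tendsto_softmax_weight_zero hc ha (fun i => hc.le.trans (hb i))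
    (fun i => by linarith [ha i, hab i]) hh hlim
    ((hg₁.continuous.tendsto xstar).comp hx) ((hg₂.continuous.tendsto xstar).comp hx) hlt
  have hsum := ((hcomp hf).add (hcomp hg₁)).add (hw.smul ((hcomp hg₂).sub (hcomp hg₁)))
  rw [zero_smul, add_zero] at hsum
  refine tendsto_nhds_unique hsum ((squeeze_zero_norm hgrad he).congr fun i => ?_)
  exact gradient_add_mul_log_exp_add_exp (hf.differentiable one_ne_zero _)
    (hg₁.differentiable one_ne_zero _) (hg₂.differentiable one_ne_zero _)
    (hc.trans_le (ha i)) (hc.trans_le (hb i)) (hh i).ne'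

end SmoothedMax

/-- If the dual iterates are bounded away from the simplex boundary
(`min θ₁ᵏ θ₂ᵏ ≥ c > 0`), then at any cluster point `y*` of the inexact
minimizers, the gradient condition holds with full weight on the strictly
larger component: if `g₁(y*) > g₂(y*)` then `∇f(y*) + ∇g₁(y*) = 0`, and
if `g₂(y*) > g₁(y*)` then `∇f(y*) + ∇g₂(y*) = 0`. -/
theorem tron_cluster_point_strict_component
    {E : Type*} [NormedAddCommGroup E] [InnerProductSpace ℝ E]
    [FiniteDimensional ℝ E]
    (f g₁ g₂ : E → ℝ)
    (hf : ContDiff ℝ 1 f) (hg₁ : ContDiff ℝ 1 g₁) (hg₂ : ContDiff ℝ 1 g₂)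
    (η : ℕ → ℝ) (hηpos : ∀ k, 0 < η k)
    (hηlim : Tendsto η atTop (𝓝 0))
    (ε : ℕ → ℝ) (hεnonneg : ∀ k, 0 ≤ ε k)
    (hεlim : Tendsto ε atTop (𝓝 0))
    (θ : ℕ → ℝ × ℝ)
    (hθ : ∀ k, 0 ≤ (θ k).1 ∧ 0 ≤ (θ k).2 ∧ (θ k).1 + (θ k).2 = 1)
    (c : ℝ) (hc : 0 < c)
    (hθmin : ∀ k, c ≤ min (θ k).1 (θ k).2)
    (y : ℕ → E)
    (hy : ∀ k : ℕ,
      ‖gradient (fun z : E => f z + η (k + 1) *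
        Real.log ((θ k).1 * Real.exp (g₁ z / η (k + 1)) +
                  (θ k).2 * Real.exp (g₂ z / η (k + 1)))) (y (k + 1))‖
        ≤ ε (k + 1))
    (ystar : E)
    (hcluster : ∃ φ : ℕ → ℕ, StrictMono φ ∧ Tendsto (y ∘ φ) atTop (𝓝 ystar)) :
    (g₁ ystar > g₂ ystar → gradient f ystar + gradient g₁ ystar = 0) ∧
    (g₂ ystar > g₁ ystar → gradient f ystar + gradient g₂ ystar = 0) := by
  obtain ⟨φ, hφ, hφy⟩ := hcluster
  -- Drop the first term of the subsequence, so that every index is a successor.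
  obtain ⟨ψ, hψ⟩ : ∃ ψ : ℕ → ℕ, ∀ n, φ (n + 1) = ψ n + 1 :=
    ⟨fun n => φ (n + 1) - 1, fun n => by have := hφ.le_apply (x := n + 1); dsimp only; omega⟩
  have htop : Tendsto (fun n => ψ n + 1) atTop atTop :=
    (hφ.tendsto_atTop.comp (tendsto_add_atTop_nat 1)).congr hψ
  have hx : Tendsto (fun n => y (ψ n + 1)) atTop (𝓝 ystar) :=
    (hφy.comp (tendsto_add_atTop_nat 1)).congr fun n => congrArg y (hψ n)
  have h₁ (n : ℕ) : c ≤ (θ (ψ n)).1 := (le_min_iff.mp (hθmin _)).1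
  have h₂ (n : ℕ) : c ≤ (θ (ψ n)).2 := (le_min_iff.mp (hθmin _)).2
  have hη := hηlim.comp htop
  have hε := hεlim.comp htop
  refine ⟨fun hlt => ?_, fun hlt => ?_⟩
  · exact gradient_add_gradient_eq_zero_of_tendsto hf hg₁ hg₂ hc h₁ h₂
      (fun n => (hθ (ψ n)).2.2) (fun n => hηpos _) hη hε hx (fun n => hy (ψ n)) hlt
  · refine gradient_add_gradient_eq_zero_of_tendsto hf hg₂ hg₁ hc h₂ h₁
      (fun n => (add_comm _ _).trans (hθ (ψ n)).2.2) (fun n => hηpos _) hη hε hx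
      (fun n => ?_) hlt
    simpa only [add_comm ((θ (ψ n)).2 * _), Function.comp_apply] using hy (ψ n)
end

section
/- Let E be a finite-dimensional real inner product space, g₁, g₂ : E → ℝ continuous, (ηᵏ) a sequence of positive reals with ηᵏ → 0, (θᵏ) a sequence in the 2-simplex, and (yᵏ) a sequence in E converging to y*. Define λₖ = θ₁ᵏ⁻¹ · exp(g₁(yᵏ)/ηᵏ) / (θ₁ᵏ⁻¹ · exp(g₁(yᵏ)/ηᵏ) + θ₂ᵏ⁻¹ · exp(g₂(yᵏ)/ηᵏ)). If g₁(y*) > g₂(y*) and there exists C ≥ 0 such that θ₂ᵏ ≤ C · θ₁ᵏ for all k, then λₖ → 1. Symmetrically, if g₁(y*) < g₂(y*) and there exists C ≥ 0 such that θ₁ᵏ ≤ C · θ₂ᵏ for all k, then λₖ → 0. -/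
open Real Filter Topology

/-- The softmax weight of the term with the strictly smaller limiting exponent vanishes as the
temperature `η` tends to `0` from above, provided its prefactor is dominated by the other one. -/
lemma tendsto_softmax_weight_zero_s2 {ι : Type*} {l : Filter ι} {a b u v η : ι → ℝ} {U V C : ℝ}
    (ha : ∀ k, 0 ≤ a k) (hb : ∀ k, 0 < b k) (hab : ∀ k, a k ≤ C * b k)
    (hη : Tendsto η l (𝓝[>] 0)) (hu : Tendsto u l (𝓝 U)) (hv : Tendsto v l (𝓝 V))
    (hUV : U < V) :
    Tendsto (fun k => a k * Real.exp (u k / η k) /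
      (a k * Real.exp (u k / η k) + b k * Real.exp (v k / η k))) l (𝓝 0) := by
  have hexp : Tendsto (fun k => C * Real.exp ((u k - v k) * (η k)⁻¹)) l (𝓝 0) := by
    have hbot : Tendsto (fun k => (u k - v k) * (η k)⁻¹) l atBot :=
      (hu.sub hv).neg_mul_atTop (sub_neg.2 hUV) (tendsto_inv_nhdsGT_zero.comp hη)
    simpa using (Real.tendsto_exp_atBot.comp hbot).const_mul C
  refine squeeze_zero (fun k => ?_) (fun k => ?_) hexp
  · have := ha k
    have := hb k
    positivity
  · have hv_pos : 0 < b k * Real.exp (v k / η k) := mul_pos (hb k) (Real.exp_pos _)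
    have hu_nonneg : 0 ≤ a k * Real.exp (u k / η k) := mul_nonneg (ha k) (Real.exp_pos _).le
    calc a k * Real.exp (u k / η k) / (a k * Real.exp (u k / η k) + b k * Real.exp (v k / η k))
        ≤ a k * Real.exp (u k / η k) / (b k * Real.exp (v k / η k)) := by
          gcongr
          linarith
      _ ≤ C * b k * Real.exp (u k / η k) / (b k * Real.exp (v k / η k)) := by
          gcongr
          exact hab k
      _ = C * Real.exp ((u k - v k) * (η k)⁻¹) := by
          have := (hb k).ne'
          rw [← div_eq_mul_inv, sub_div, Real.exp_sub]
          field_simp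

/-- **Limits of the smoothing weights `λₖ`.** With `η k → 0⁺`, `θ k` in the
2-simplex and `y k → y*`, the weight
`λₖ = θ₁ᵏ exp(g₁(yᵏ)/ηᵏ) / (θ₁ᵏ exp(g₁(yᵏ)/ηᵏ) + θ₂ᵏ exp(g₂(yᵏ)/ηᵏ))`
tends to `1` if `g₁(y*) > g₂(y*)` (assuming `θ₂ᵏ ≤ C θ₁ᵏ`), and
tends to `0` if `g₁(y*) < g₂(y*)` (assuming `θ₁ᵏ ≤ C θ₂ᵏ`). -/
theorem tron_lambda_limit
    {E : Type*} [NormedAddCommGroup E] [InnerProductSpace ℝ E]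
    [FiniteDimensional ℝ E]
    (g₁ g₂ : E → ℝ) (hg₁ : Continuous g₁) (hg₂ : Continuous g₂)
    (η : ℕ → ℝ) (hηpos : ∀ k, 0 < η k)
    (hηlim : Tendsto η atTop (𝓝 0))
    (θ : ℕ → ℝ × ℝ)
    (hθ : ∀ k, 0 ≤ (θ k).1 ∧ 0 ≤ (θ k).2 ∧ (θ k).1 + (θ k).2 = 1)
    (y : ℕ → E) (ystar : E)
    (hy : Tendsto y atTop (𝓝 ystar))
    (lam : ℕ → ℝ)
    (hlam : ∀ k, lam k =
      (θ k).1 * Real.exp (g₁ (y k) / η k) /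
        ((θ k).1 * Real.exp (g₁ (y k) / η k) +
         (θ k).2 * Real.exp (g₂ (y k) / η k))) :
    (g₁ ystar > g₂ ystar → (∃ C : ℝ, 0 ≤ C ∧ ∀ k, (θ k).2 ≤ C * (θ k).1) →
      Tendsto lam atTop (𝓝 1)) ∧
    (g₁ ystar < g₂ ystar → (∃ C : ℝ, 0 ≤ C ∧ ∀ k, (θ k).1 ≤ C * (θ k).2) →
      Tendsto lam atTop (𝓝 0)) := by
  have hη : Tendsto η atTop (𝓝[>] 0) :=
    tendsto_nhdsWithin_iff.2 ⟨hηlim, .of_forall hηpos⟩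
  have h₁ : Tendsto (fun k => g₁ (y k)) atTop (𝓝 (g₁ ystar)) := (hg₁.tendsto ystar).comp hy
  have h₂ : Tendsto (fun k => g₂ (y k)) atTop (𝓝 (g₂ ystar)) := (hg₂.tendsto ystar).comp hy
  constructor
  · rintro hlt ⟨C, -, hC⟩
    have hpos : ∀ k, 0 < (θ k).1 := fun k => by
      obtain ⟨h1, -, hsum⟩ := hθ k
      refine h1.lt_of_ne' fun h0 => ?_
      have := hC k
      rw [h0] at this hsum
      linarith
    have hcompl := (tendsto_softmax_weight_zero_s2 (fun k => (hθ k).2.1) hpos hC hη h₂ h₁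
      hlt).const_sub 1
    rw [sub_zero] at hcompl
    refine hcompl.congr fun k => ?_
    have hden : 0 < (θ k).2 * Real.exp (g₂ (y k) / η k) + (θ k).1 * Real.exp (g₁ (y k) / η k) :=
      add_pos_of_nonneg_of_pos (mul_nonneg (hθ k).2.1 (Real.exp_pos _).le)
        (mul_pos (hpos k) (Real.exp_pos _))
    rw [hlam, one_sub_div hden.ne', add_sub_cancel_left, add_comm]
  · rintro hlt ⟨C, -, hC⟩
    have hpos : ∀ k, 0 < (θ k).2 := fun k => by
      obtain ⟨-, h2, hsum⟩ := hθ k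
      refine h2.lt_of_ne' fun h0 => ?_
      have := hC k
      rw [h0] at this hsum
      linarith
    exact (tendsto_softmax_weight_zero_s2 (fun k => (hθ k).1) hpos hC hη h₁ h₂ hlt).congr
      fun k => (hlam k).symm
end
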